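/- arXiv:1911.06398 — 2 statements merged into one kernel-verified Lean document; each statement's English description precedes it below -/
import Mathlib

section
/- Let G be a strongly uncontrollable graph on n vertices and let G̃ be the graph on n+1 vertices obtained from G by adding one new vertex adjacent to every vertex of G. Then G̃ is strongly uncontrollable if and only if every eigenvalue of L(G) is strictly less than n (i.e., the spectral radius of L(G) is less than n). -/
open Classical Matrix

noncomputable def lap {n : ℕ} (G : SimpleGraph (Fin n)) : Matrix (Fin n) (Fin n) ℝ :=
  Matrix.of fun i j =>
    (if i = j then ((G.neighborSet i).ncard : ℝ) else 0) - (if G.Adj i j then 1 else 0)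

def IsTwin {n : ℕ} (G : SimpleGraph (Fin n)) (u v : Fin n) : Prop :=
  u ≠ v ∧ G.neighborSet u \ {v} = G.neighborSet v \ {u}

def IsEigenvalue {n : ℕ} (M : Matrix (Fin n) (Fin n) ℝ) (μ : ℝ) : Prop :=
  ∃ x : Fin n → ℝ, x ≠ 0 ∧ M.mulVec x = μ • x

def HasSimpleSpectrum {n : ℕ} (M : Matrix (Fin n) (Fin n) ℝ) : Prop :=
  ∃ μ : Fin n → ℝ, Function.Injective μ ∧ ∀ i, IsEigenvalue M (μ i)

def Controllable {n : ℕ} (M : Matrix (Fin n) (Fin n) ℝ) (b : Fin n → ℝ) : Prop :=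
  Submodule.span ℝ (Set.range fun k : Fin n => (M ^ (k : ℕ)).mulVec b) = ⊤

def StronglyUncontrollable {n : ℕ} (G : SimpleGraph (Fin n)) : Prop :=
  G.Connected ∧ HasSimpleSpectrum (lap G) ∧
    ∀ b : Fin n → ℝ, (∀ i, b i = 0 ∨ b i = 1) → ¬ Controllable (lap G) b

def Pmat {n k : ℕ} (c : Fin n → Fin k) : Matrix (Fin n) (Fin k) ℝ :=
  Matrix.of fun i j => if c i = j then 1 else 0

def IsAEP {n k : ℕ} (G : SimpleGraph (Fin n)) (c : Fin n → Fin k) : Prop :=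
  ∀ i j : Fin k, i ≠ j → ∀ x y : Fin n, c x = i → c y = i →
    (G.neighborSet x ∩ {z | c z = j}).ncard = (G.neighborSet y ∩ {z | c z = j}).ncard

noncomputable def quotLap {n k : ℕ} (G : SimpleGraph (Fin n)) (c : Fin n → Fin k) :
    Matrix (Fin k) (Fin k) ℝ :=
  ((Pmat c)ᵀ * Pmat c)⁻¹ * (Pmat c)ᵀ * lap G * Pmat c

def IsQuotAEP {k m : ℕ} (Lq : Matrix (Fin k) (Fin k) ℝ) (r : Fin k → Fin m) : Prop :=
  ∀ a b : Fin m, a ≠ b → ∀ C C' : Fin k, r C = a → r C' = a →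
    ∑ C'' ∈ Finset.univ.filter (fun C'' => r C'' = b), Lq C C'' =
      ∑ C'' ∈ Finset.univ.filter (fun C'' => r C'' = b), Lq C' C''

def IsGraphAut {n : ℕ} (G : SimpleGraph (Fin n)) (σ : Equiv.Perm (Fin n)) : Prop :=
  ∀ x y, G.Adj x y ↔ G.Adj (σ x) (σ y)

def joinOne {n : ℕ} (G : SimpleGraph (Fin n)) : SimpleGraph (Fin (n + 1)) where
  Adj x y := x ≠ y ∧ ((x : ℕ) = n ∨ (y : ℕ) = n ∨
    ∃ (hx : (x : ℕ) < n) (hy : (y : ℕ) < n), G.Adj ⟨x, hx⟩ ⟨y, hy⟩)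
  symm := by
    refine ⟨?_⟩
    rintro x y ⟨hxy, h⟩
    refine ⟨hxy.symm, ?_⟩
    rcases h with h | h | ⟨hx, hy, h⟩
    exacts [Or.inr (Or.inl h), Or.inl h, Or.inr (Or.inr ⟨hy, hx, h.symm⟩)]
  loopless := ⟨fun x h => h.1 rfl⟩

def joinTwo {n : ℕ} (G : SimpleGraph (Fin n)) : SimpleGraph (Fin (n + 2)) where
  Adj x y := x ≠ y ∧ (((x : ℕ) < n ∧ n ≤ (y : ℕ)) ∨ ((y : ℕ) < n ∧ n ≤ (x : ℕ)) ∨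
    ∃ (hx : (x : ℕ) < n) (hy : (y : ℕ) < n), G.Adj ⟨x, hx⟩ ⟨y, hy⟩)
  symm := by
    refine ⟨?_⟩
    rintro x y ⟨hxy, h⟩
    refine ⟨hxy.symm, ?_⟩
    rcases h with h | h | ⟨hx, hy, h⟩
    exacts [Or.inr (Or.inl h), Or.inl h, Or.inr (Or.inr ⟨hy, hx, h.symm⟩)]
  loopless := ⟨fun x h => h.1 rfl⟩

def addPendant {n : ℕ} (G : SimpleGraph (Fin n)) (v : Fin n) : SimpleGraph (Fin (n + 1)) where
  Adj x y := ((x : ℕ) = n ∧ (y : ℕ) = (v : ℕ)) ∨ ((y : ℕ) = n ∧ (x : ℕ) = (v : ℕ)) ∨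
    ∃ (hx : (x : ℕ) < n) (hy : (y : ℕ) < n), G.Adj ⟨x, hx⟩ ⟨y, hy⟩
  symm := by
    refine ⟨?_⟩
    rintro x y (h | h | ⟨hx, hy, h⟩)
    exacts [Or.inr (Or.inl h), Or.inl h, Or.inr (Or.inr ⟨hy, hx, h.symm⟩)]
  loopless := by
    refine ⟨?_⟩
    intro x h
    have hv := v.isLt
    rcases h with ⟨h1, h2⟩ | ⟨h1, h2⟩ | ⟨hx, hy, h⟩
    · omega
    · omega
    · exact G.loopless.irrefl _ h

/-
The Laplacian of the cone `G̃` acts on `x ⊥ 1`, extended by zero, as `L(G) + 1`, and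
`(1, …, 1, -n)` is an eigenvector for `n + 1`. So the spectrum of `L(G̃)` is that of `L(G)` with
every nonzero `μ` moved to `μ + 1`, together with `n + 1`. The eigenvalues of `L(G)` never exceed
`n`, since `n - L(G) = L(Gᶜ) + J`, so the spectrum stays simple exactly when `n` is not one of them.

Controllability never obstructs: by the Popov–Belevitch–Hautus test a symmetric matrix with simple
spectrum is uncontrollable from `b` iff some eigenvector is orthogonal to `b`. For `L(G)` and a
nonzero binary `b` that eigenvector is not constant, hence is orthogonal to `1`, and its extension
by zero is an eigenvector of `L(G̃)` orthogonal to both binary extensions of `b`. For `b = 0` the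
eigenvector found for the all-ones vector serves.
-/

section Eigenvectors

variable {ι R : Type*} [Fintype ι] [CommRing R] {M : Matrix ι ι R} {x : ι → R} {μ : R}

theorem vecMul_eq_smul_of_isSymm (hM : M.IsSymm) (hx : M *ᵥ x = μ • x) : x ᵥ* M = μ • x := by
  rw [← mulVec_transpose, hM.eq, hx]

theorem dotProduct_pow_mulVec [DecidableEq ι] (hx : x ᵥ* M = μ • x) (b : ι → R) (k : ℕ) :
    x ⬝ᵥ (M ^ k *ᵥ b) = μ ^ k * (x ⬝ᵥ b) := by
  induction k with
  | zero => simp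
  | succ k ih =>
    rw [pow_succ', ← mulVec_mulVec, dotProduct_mulVec, hx, smul_dotProduct, ih, smul_eq_mul,
      pow_succ', mul_assoc]

end Eigenvectors

section Controllability

variable {n : ℕ} {M : Matrix (Fin n) (Fin n) ℝ} {b : Fin n → ℝ}

theorem not_controllable_of_dotProduct_eq_zero {x : Fin n → ℝ} {μ : ℝ} (hx0 : x ≠ 0)
    (hx : x ᵥ* M = μ • x) (hb : x ⬝ᵥ b = 0) : ¬ Controllable M b := by
  intro hspan
  have hle : Submodule.span ℝ (Set.range fun k : Fin n => M ^ (k : ℕ) *ᵥ b) ≤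
      LinearMap.ker (dotProductBilin ℝ ℝ x) := by
    rw [Submodule.span_le]
    rintro _ ⟨k, rfl⟩
    simp [dotProduct_pow_mulVec hx, hb]
  have hxx : x ⬝ᵥ x = 0 := hle (hspan.ge Submodule.mem_top)
  exact hx0 (dotProduct_self_eq_zero.1 hxx)

theorem controllable_of_forall_dotProduct_ne_zero {x : Fin n → Fin n → ℝ} {μ : Fin n → ℝ}
    (hμ : Function.Injective μ) (hx : ∀ i, x i ᵥ* M = μ i • x i) (hb : ∀ i, x i ⬝ᵥ b ≠ 0) :
    Controllable M b := by
  refine LinearIndependent.span_eq_top_of_card_eq_finrank' (Fintype.linearIndependent_iff.2 ?_)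
    (by simp)
  intro c hc
  -- Pairing a relation `∑ cₖ Mᵏ b = 0` with `x i` shows that `μ i` is a root of `∑ cₖ tᵏ`.
  have hroot (i : Fin n) : ∑ k : Fin n, c k * μ i ^ (k : ℕ) = 0 := by
    have hpair : x i ⬝ᵥ ∑ k : Fin n, c k • (M ^ (k : ℕ) *ᵥ b) = 0 := by
      rw [hc, dotProduct_zero]
    simp only [dotProduct_sum, dotProduct_smul, dotProduct_pow_mulVec (hx i), smul_eq_mul,
      ← mul_assoc, ← Finset.sum_mul] at hpair
    exact (mul_eq_zero.1 hpair).resolve_right (hb i)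
  exact congrFun (eq_zero_of_forall_index_sum_mul_pow_eq_zero hμ hroot)

theorem exists_eigenvector_dotProduct_eq_zero (hM : M.IsSymm) (hs : HasSimpleSpectrum M)
    (hb : ¬ Controllable M b) :
    ∃ (μ : ℝ) (x : Fin n → ℝ), x ≠ 0 ∧ M *ᵥ x = μ • x ∧ x ⬝ᵥ b = 0 := by
  obtain ⟨μ, hμ, heig⟩ := hs
  choose x hx0 hx using heig
  by_contra! hne
  exact hb (controllable_of_forall_dotProduct_ne_zero hμ
    (fun i => vecMul_eq_smul_of_isSymm hM (hx i)) fun i => hne _ _ (hx0 i) (hx i))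

end Controllability

section SimpleSpectrum

variable {n : ℕ} {M : Matrix (Fin n) (Fin n) ℝ}

theorem HasSimpleSpectrum.exists_eigenbasis (hs : HasSimpleSpectrum M) :
    ∃ (μ : Fin n → ℝ) (e : Module.Basis (Fin n) ℝ (Fin n → ℝ)),
      Function.Injective μ ∧ ∀ i, M *ᵥ e i = μ i • e i := by
  obtain ⟨μ, hμ, heig⟩ := hs
  choose x hx0 hx using heig
  have hli : LinearIndependent ℝ x :=
    Module.End.eigenvectors_linearIndependent' (toLin' M) μ hμ x fun i =>
      ⟨Module.End.mem_eigenspace_iff.2 (hx i), hx0 i⟩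
  exact ⟨μ, basisOfPiSpaceOfLinearIndependent hli, hμ, by simpa using hx⟩

theorem HasSimpleSpectrum.exists_eq_smul (hs : HasSimpleSpectrum M) {ν : ℝ} {u v : Fin n → ℝ}
    (hu0 : u ≠ 0) (hu : M *ᵥ u = ν • u) (hv : M *ᵥ v = ν • v) : ∃ c : ℝ, v = c • u := by
  obtain ⟨μ, e, hμ, he⟩ := hs.exists_eigenbasis
  have hrepr (w : Fin n → ℝ) (i : Fin n) : e.repr (M *ᵥ w) i = μ i * e.repr w i := by
    have hlin : e.coord i ∘ₗ toLin' M = μ i • e.coord i := e.ext fun j => by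
      obtain rfl | hij := eq_or_ne i j
      · simp [he]
      · simp [he, hij.symm]
    exact LinearMap.congr_fun hlin w
  have hcoord {w : Fin n → ℝ} (hw : M *ᵥ w = ν • w) (i : Fin n) (hi : e.repr w i ≠ 0) :
      μ i = ν := by
    have h := hrepr w i
    rw [hw, map_smul, Finsupp.smul_apply, smul_eq_mul] at h
    exact (mul_right_cancel₀ hi h).symm
  obtain ⟨i, hi⟩ : ∃ i, e.repr u i ≠ 0 := by
    by_contra! h
    exact hu0 (e.ext_elem (by simpa using h))
  refine ⟨e.repr v i / e.repr u i, e.ext_elem fun j => ?_⟩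
  obtain rfl | hji := eq_or_ne j i
  · simp [hi]
  · have hvanish {w : Fin n → ℝ} (hw : M *ᵥ w = ν • w) : e.repr w j = 0 := by
      by_contra hj
      exact hji (hμ ((hcoord hw j hj).trans (hcoord hu i hi).symm))
    simp [hvanish hu, hvanish hv]

theorem IsEigenvalue.nonneg_of_posSemidef {μ : ℝ} (h : IsEigenvalue M μ) (hM : M.PosSemidef) :
    0 ≤ μ := by
  obtain ⟨x, hx0, hx⟩ := h
  have hquad := hM.dotProduct_mulVec_nonneg x
  rw [hx, dotProduct_smul, smul_eq_mul] at hquad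
  exact nonneg_of_mul_nonneg_left hquad (dotProduct_star_self_pos_iff.2 hx0)

theorem IsEigenvalue.smul_one_sub {μ : ℝ} (h : IsEigenvalue M μ) (c : ℝ) :
    IsEigenvalue (c • 1 - M) (c - μ) := by
  obtain ⟨x, hx0, hx⟩ := h
  exact ⟨x, hx0, by rw [sub_mulVec, smul_mulVec, one_mulVec, hx, sub_smul]⟩

end SimpleSpectrum

section Complement

variable {V : Type*} [Fintype V] [DecidableEq V] (G : SimpleGraph V) [DecidableRel G.Adj]

theorem lapMatrix_add_lapMatrix_compl (R : Type*) [Ring R] :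
    G.lapMatrix R + Gᶜ.lapMatrix R = (Fintype.card V : R) • 1 - of 1 := by
  ext i j
  obtain rfl | hij := eq_or_ne i j
  · have hdeg : G.degree i + Gᶜ.degree i + 1 = Fintype.card V := by
      have := G.degree_lt_card_verts i
      rw [G.degree_compl]
      lia
    simp [SimpleGraph.lapMatrix, SimpleGraph.degMatrix, ← hdeg]
  · by_cases h : G.Adj i j <;>
      simp [SimpleGraph.lapMatrix, SimpleGraph.degMatrix, hij, h]

theorem posSemidef_card_smul_one_sub_lapMatrix :
    ((Fintype.card V : ℝ) • 1 - G.lapMatrix ℝ).PosSemidef := by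
  have hsplit : (Fintype.card V : ℝ) • 1 - G.lapMatrix ℝ =
      Gᶜ.lapMatrix ℝ + vecMulVec 1 (star 1) := by
    rw [sub_eq_iff_eq_add', ← add_assoc, lapMatrix_add_lapMatrix_compl, eq_comm]
    convert sub_add_cancel _ _
    ext
    simp [vecMulVec_apply]
  rw [hsplit]
  exact (Gᶜ.posSemidef_lapMatrix ℝ).add (posSemidef_vecMulVec_self_star 1)

end Complement

section Laplacian

variable {n : ℕ} (G : SimpleGraph (Fin n)) {μ : ℝ}

theorem lap_eq_lapMatrix : lap G = G.lapMatrix ℝ := by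
  ext i j
  have hdeg : (G.neighborSet i).ncard = G.degree i := by
    rw [Set.ncard_eq_toFinset_card', SimpleGraph.degree, SimpleGraph.neighborFinset]
  simp [lap, SimpleGraph.lapMatrix, SimpleGraph.degMatrix, diagonal_apply, hdeg]

theorem isSymm_lap : (lap G).IsSymm := by
  rw [lap_eq_lapMatrix]
  exact G.isSymm_lapMatrix ℝ

theorem lap_mulVec_apply (x : Fin n → ℝ) (i : Fin n) :
    (lap G *ᵥ x) i = ∑ j, if G.Adj i j then x i - x j else 0 := by
  rw [lap_eq_lapMatrix, SimpleGraph.lapMatrix_mulVec_apply, ← Finset.sum_filter,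
    ← SimpleGraph.neighborFinset_eq_filter, Finset.sum_sub_distrib, Finset.sum_const,
    SimpleGraph.card_neighborFinset_eq_degree, nsmul_eq_mul]

theorem lap_mulVec_one : lap G *ᵥ 1 = 0 := by
  rw [lap_eq_lapMatrix]
  exact G.lapMatrix_mulVec_const_eq_zero

theorem isEigenvalue_lap_zero [NeZero n] : IsEigenvalue (lap G) 0 :=
  ⟨1, one_ne_zero, by rw [lap_mulVec_one, zero_smul]⟩

variable {G}

theorem IsEigenvalue.nonneg_of_lap (h : IsEigenvalue (lap G) μ) : 0 ≤ μ := by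
  rw [lap_eq_lapMatrix] at h
  exact h.nonneg_of_posSemidef (G.posSemidef_lapMatrix ℝ)

theorem IsEigenvalue.le_of_lap (h : IsEigenvalue (lap G) μ) : μ ≤ n := by
  rw [lap_eq_lapMatrix] at h
  have hpos := posSemidef_card_smul_one_sub_lapMatrix G
  rw [Fintype.card_fin] at hpos
  exact sub_nonneg.1 ((h.smul_one_sub n).nonneg_of_posSemidef hpos)

theorem sum_eq_zero_of_lap_mulVec_eq_smul (hμ : μ ≠ 0) {x : Fin n → ℝ}
    (hx : lap G *ᵥ x = μ • x) : ∑ i, x i = 0 := by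
  have hL : x ⬝ᵥ (lap G *ᵥ 1) = μ * ∑ i, x i := by
    rw [dotProduct_mulVec, vecMul_eq_smul_of_isSymm (isSymm_lap G) hx, smul_dotProduct,
      dotProduct_one, smul_eq_mul]
  rw [lap_mulVec_one, dotProduct_zero] at hL
  exact (mul_eq_zero.1 hL.symm).resolve_left hμ

theorem exists_eq_const_of_lap_mulVec_eq_zero (hG : G.Connected) {x : Fin n → ℝ}
    (hx : lap G *ᵥ x = 0) : ∃ c : ℝ, x = fun _ => c := by
  obtain ⟨i⟩ := hG.nonempty
  rw [lap_eq_lapMatrix, SimpleGraph.lapMatrix_mulVec_eq_zero_iff_forall_reachable] at hx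
  exact ⟨x i, funext fun j => hx j i (hG.preconnected j i)⟩

end Laplacian

section Cone

variable {n : ℕ} (G : SimpleGraph (Fin n)) {μ : ℝ} {x : Fin n → ℝ}

theorem joinOne_adj_castSucc_castSucc (i j : Fin n) :
    (joinOne G).Adj i.castSucc j.castSucc ↔ G.Adj i j := by
  simpa [joinOne, i.isLt.ne, j.isLt.ne] using fun h : G.Adj i j => h.ne

theorem joinOne_adj_castSucc_last (i : Fin n) : (joinOne G).Adj i.castSucc (Fin.last n) :=
  ⟨i.castSucc_ne_last, .inr (.inl rfl)⟩

theorem joinOne_connected : (joinOne G).Connected :=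
  .of_isUniversal (v := Fin.last n) fun i hi => by
    obtain ⟨i, rfl⟩ := i.exists_castSucc_eq.2 hi.symm
    exact (joinOne_adj_castSucc_last G i).symm

theorem lap_joinOne_mulVec_snoc (x : Fin n → ℝ) (s : ℝ) :
    lap (joinOne G) *ᵥ (Fin.snoc x s : Fin (n + 1) → ℝ) =
      (Fin.snoc (fun i => (lap G *ᵥ x) i + (x i - s)) (n * s - ∑ i, x i) : Fin (n + 1) → ℝ) := by
  ext i
  rw [lap_mulVec_apply, Fin.sum_univ_castSucc]
  induction i using Fin.lastCases with
  | last => simp [(joinOne_adj_castSucc_last G _).symm]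
  | cast i => simp [joinOne_adj_castSucc_castSucc, joinOne_adj_castSucc_last, lap_mulVec_apply]

theorem lap_joinOne_mulVec_snoc_one :
    lap (joinOne G) *ᵥ (Fin.snoc 1 (-n : ℝ) : Fin (n + 1) → ℝ) =
      (n + 1 : ℝ) • (Fin.snoc 1 (-n : ℝ) : Fin (n + 1) → ℝ) := by
  rw [lap_joinOne_mulVec_snoc, lap_mulVec_one]
  ext i
  induction i using Fin.lastCases with
  | last =>
    have : (n : ℝ) * -n - n = (n + 1) * -n := by ring
    simpa
  | cast i =>
    have : (1 : ℝ) + n = n + 1 := add_comm _ _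
    simpa

variable {G}

theorem lap_joinOne_mulVec_snoc_zero (hμ : μ ≠ 0) (hx : lap G *ᵥ x = μ • x) :
    lap (joinOne G) *ᵥ (Fin.snoc x 0 : Fin (n + 1) → ℝ) =
      (μ + 1) • (Fin.snoc x 0 : Fin (n + 1) → ℝ) := by
  rw [lap_joinOne_mulVec_snoc, sum_eq_zero_of_lap_mulVec_eq_smul hμ hx, hx]
  ext i
  induction i using Fin.lastCases with
  | last => simp
  | cast i => simp [add_mul]

theorem snoc_ne_zero (hx : x ≠ 0) (s : ℝ) : (Fin.snoc x s : Fin (n + 1) → ℝ) ≠ 0 := fun h =>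
  hx (funext fun i => by simpa using congrFun h i.castSucc)

theorem isEigenvalue_lap_joinOne_card_add_one [NeZero n] :
    IsEigenvalue (lap (joinOne G)) (n + 1) :=
  ⟨_, snoc_ne_zero one_ne_zero _, lap_joinOne_mulVec_snoc_one G⟩

theorem IsEigenvalue.lap_joinOne_add_one (h : IsEigenvalue (lap G) μ) (hμ : μ ≠ 0) :
    IsEigenvalue (lap (joinOne G)) (μ + 1) := by
  obtain ⟨x, hx0, hx⟩ := h
  exact ⟨_, snoc_ne_zero hx0 0, lap_joinOne_mulVec_snoc_zero hμ hx⟩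

theorem not_hasSimpleSpectrum_lap_joinOne (h : IsEigenvalue (lap G) n) :
    ¬ HasSimpleSpectrum (lap (joinOne G)) := by
  intro hs
  obtain ⟨x, hx0, hx⟩ := h
  obtain ⟨i, -⟩ := Function.ne_iff.1 hx0
  have hn : (n : ℝ) ≠ 0 := Nat.cast_ne_zero.2 i.pos.ne'
  obtain ⟨c, hc⟩ := hs.exists_eq_smul (snoc_ne_zero hx0 0) (lap_joinOne_mulVec_snoc_zero hn hx)
    (lap_joinOne_mulVec_snoc_one G)
  exact hn (by simpa using congrFun hc (Fin.last n))

theorem HasSimpleSpectrum.lap_joinOne (hs : HasSimpleSpectrum (lap G))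
    (hlt : ∀ μ, IsEigenvalue (lap G) μ → μ < n) : HasSimpleSpectrum (lap (joinOne G)) := by
  obtain ⟨μ, hμ, heig⟩ := hs
  have hnonneg (i : Fin n) : 0 ≤ μ i := (heig i).nonneg_of_lap
  have hltn (i : Fin n) : μ i < n := hlt _ (heig i)
  refine ⟨Fin.snoc (fun i => (if μ i = 0 then (n : ℝ) else μ i) + 1) 0, ?_, ?_⟩
  · refine Fin.snoc_injective_iff.2 ⟨fun i j hij => hμ ?_, ?_⟩
    · grind [hltn i, hltn j]
    · rintro ⟨i, hi⟩
      grind [hnonneg i, hltn i]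
  · intro i
    induction i using Fin.lastCases with
    | last => simpa using isEigenvalue_lap_zero (joinOne G)
    | cast i =>
      have : NeZero n := ⟨i.pos.ne'⟩
      rw [Fin.snoc_castSucc]
      split_ifs with hi
      · exact isEigenvalue_lap_joinOne_card_add_one
      · exact (heig i).lap_joinOne_add_one hi

theorem hasSimpleSpectrum_lap_joinOne_iff (hs : HasSimpleSpectrum (lap G)) :
    HasSimpleSpectrum (lap (joinOne G)) ↔ ∀ μ, IsEigenvalue (lap G) μ → μ < n := by
  refine ⟨fun h μ hμ => hμ.le_of_lap.lt_of_ne ?_, hs.lap_joinOne⟩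
  rintro rfl
  exact not_hasSimpleSpectrum_lap_joinOne hμ h

end Cone

section StronglyUncontrollable

variable {n : ℕ} {G : SimpleGraph (Fin n)}

theorem StronglyUncontrollable.exists_eigenvector_of_ne_zero (hG : StronglyUncontrollable G)
    {b : Fin n → ℝ} (hb : ∀ i, b i = 0 ∨ b i = 1) (hb0 : b ≠ 0) :
    ∃ (μ : ℝ) (x : Fin n → ℝ), μ ≠ 0 ∧ x ≠ 0 ∧ lap G *ᵥ x = μ • x ∧ x ⬝ᵥ b = 0 := by
  obtain ⟨hconn, hs, hunc⟩ := hG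
  obtain ⟨μ, x, hx0, hx, hxb⟩ := exists_eigenvector_dotProduct_eq_zero (isSymm_lap G) hs (hunc b hb)
  refine ⟨μ, x, ?_, hx0, hx, hxb⟩
  rintro rfl
  rw [zero_smul] at hx
  obtain ⟨c, rfl⟩ := exists_eq_const_of_lap_mulVec_eq_zero hconn hx
  have hc : c ≠ 0 := fun h => hx0 (funext fun _ => h)
  have hnonneg : 0 ≤ b := fun i => by rcases hb i with h | h <;> simp [h]
  have hsum : ∑ i, b i = 0 := by
    simpa [dotProduct, ← Finset.mul_sum, hc] using hxb
  exact hb0 ((Fintype.sum_eq_zero_iff_of_nonneg hnonneg).1 hsum)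

theorem StronglyUncontrollable.exists_eigenvector (hG : StronglyUncontrollable G)
    {b : Fin n → ℝ} (hb : ∀ i, b i = 0 ∨ b i = 1) :
    ∃ (μ : ℝ) (x : Fin n → ℝ), μ ≠ 0 ∧ x ≠ 0 ∧ lap G *ᵥ x = μ • x ∧ x ⬝ᵥ b = 0 := by
  obtain rfl | hb0 := eq_or_ne b 0
  · have : Nonempty (Fin n) := hG.1.nonempty
    obtain ⟨μ, x, hμ, hx0, hx, -⟩ :=
      hG.exists_eigenvector_of_ne_zero (b := 1) (fun _ => .inr rfl) one_ne_zero
    exact ⟨μ, x, hμ, hx0, hx, dotProduct_zero x⟩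
  · exact hG.exists_eigenvector_of_ne_zero hb hb0

theorem StronglyUncontrollable.not_controllable_lap_joinOne (hG : StronglyUncontrollable G)
    {b : Fin (n + 1) → ℝ} (hb : ∀ i, b i = 0 ∨ b i = 1) :
    ¬ Controllable (lap (joinOne G)) b := by
  obtain ⟨μ, x, hμ, hx0, hx, hxb⟩ :=
    hG.exists_eigenvector (b := fun i => b i.castSucc) fun i => hb i.castSucc
  refine not_controllable_of_dotProduct_eq_zero (snoc_ne_zero hx0 0)
    (vecMul_eq_smul_of_isSymm (isSymm_lap _) (lap_joinOne_mulVec_snoc_zero hμ hx)) ?_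
  simpa [dotProduct, Fin.sum_univ_castSucc] using hxb

end StronglyUncontrollable

theorem stmt6 {n : ℕ} (G : SimpleGraph (Fin n)) (hG : StronglyUncontrollable G) :
    StronglyUncontrollable (joinOne G) ↔
      ∀ μ : ℝ, IsEigenvalue (lap G) μ → μ < n := by
  rw [← hasSimpleSpectrum_lap_joinOne_iff hG.2.1]
  exact ⟨fun h => h.2.1,
    fun hs => ⟨joinOne_connected G, hs, fun _ hb => hG.not_controllable_lap_joinOne hb⟩⟩
end

section
/- Let G be a simple graph on an even number n of vertices whose vertex set is the disjoint union of n/2 twin pairs. Then for every one of these twin pairs {u,v}, the integer deg(u) + A(G)_{u,v} (which is the Laplacian eigenvalue induced by the twin pair) is even. -/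
open Classical Matrix

/-!
Fix a twin pair `{u, v}`. Any other twin pair lies entirely inside or entirely outside the
neighborhood of `u`, since twins have the same adjacency to `u`. Hence `N(u) \ {v}`
is a union of twin pairs and has even cardinality, and `deg u + A u v` equals this cardinality plus
`2 * A u v`.
-/

/-- Twin vertices, for graphs on an arbitrary vertex type; on `Fin n` this is definitionally
`IsTwin`. Each twin is removed from the other's neighborhood, so twins may be adjacent. -/
def AreTwins {V : Type*} (G : SimpleGraph V) (x y : V) : Prop :=
  x ≠ y ∧ G.neighborSet x \ {y} = G.neighborSet y \ {x}

theorem AreTwins.adj_iff {V : Type*} {G : SimpleGraph V} {x y w : V} (h : AreTwins G x y)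
    (hx : w ≠ x) (hy : w ≠ y) : G.Adj w x ↔ G.Adj w y := by
  simpa [hx, hy, G.adj_comm w] using Set.ext_iff.1 h.2 w

section Pairing

variable {V ι : Type*} {u v : ι → V} {p : V → ι}

theorem even_card_of_pairing (huv : ∀ i, u i ≠ v i)
    (hp : ∀ i x, p x = i ↔ x = u i ∨ x = v i)
    {s : Finset V} (hs : ∀ i, u i ∈ s ↔ v i ∈ s) : Even s.card := by
  rw [Finset.card_eq_sum_card_image p s]
  refine Finset.even_sum _ fun i _ => ?_
  have fiber_eq : {x ∈ s | p x = i} = if u i ∈ s then {u i, v i} else ∅ := by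
    ext x
    split_ifs <;> grind
  rw [fiber_eq]
  split_ifs
  · simp [Finset.card_pair (huv i)]
  · simp

theorem even_ncard_neighborSet_sdiff_twin {G : SimpleGraph V}
    (htwin : ∀ i, AreTwins G (u i) (v i)) (hp : ∀ i x, p x = i ↔ x = u i ∨ x = v i)
    {i : ι} (hfin : (G.neighborSet (u i)).Finite) :
    Even (G.neighborSet (u i) \ {v i}).ncard := by
  rw [Set.ncard_eq_toFinset_card _ hfin.sdiff]
  refine even_card_of_pairing (fun j => (htwin j).1) hp fun j => ?_
  simp only [Set.Finite.mem_toFinset, Set.mem_sdiff, SimpleGraph.mem_neighborSet,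
    Set.mem_singleton_iff]
  obtain rfl | hij := eq_or_ne j i
  · simp
  · have hu : p (u i) = i := (hp _ _).2 (.inl rfl)
    have hv : p (v i) = i := (hp _ _).2 (.inr rfl)
    have u_notMem : ¬ (u i = u j ∨ u i = v j) := fun h => hij (((hp j _).2 h).symm.trans hu)
    have v_notMem : ¬ (v i = u j ∨ v i = v j) := fun h => hij (((hp j _).2 h).symm.trans hv)
    push Not at u_notMem v_notMem
    simp only [(htwin j).adj_iff u_notMem.1 u_notMem.2, v_notMem.1.symm, v_notMem.2.symm]

end Pairing

theorem stmt18_general {V ι : Type*} (G : SimpleGraph V) (u v : ι → V)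
    (htwin : ∀ i, AreTwins G (u i) (v i)) (p : V → ι)
    (hp : ∀ i x, p x = i ↔ x = u i ∨ x = v i) (i : ι) (hfin : (G.neighborSet (u i)).Finite) :
    Even ((G.neighborSet (u i)).ncard + (if G.Adj (u i) (v i) then 1 else 0)) := by
  have heven := even_ncard_neighborSet_sdiff_twin htwin hp hfin
  split_ifs with hadj
  · rw [← Set.ncard_sdiff_singleton_add_one ((G.mem_neighborSet _ _).2 hadj) hfin, add_assoc]
    exact heven.add even_two
  · rwa [Set.sdiff_singleton_eq_self (mt (G.mem_neighborSet _ _).1 hadj)] at heven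

theorem stmt18 {n t : ℕ} (hn : n = 2 * t) (G : SimpleGraph (Fin n))
    (u v : Fin t → Fin n) (htwin : ∀ i, IsTwin G (u i) (v i))
    (p : Fin n → Fin t) (hp : ∀ (i : Fin t) (x : Fin n), p x = i ↔ (x = u i ∨ x = v i)) :
    ∀ i, Even ((G.neighborSet (u i)).ncard + (if G.Adj (u i) (v i) then 1 else 0)) :=
  fun i => stmt18_general G u v htwin p hp i (Set.toFinite _)
end
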